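/- Finite model property of S4DS: for every bimodal formula A, A ∈ S4DS if and only if F ⊨ A for every finite S4D-frame F that is a DS-frame. -/

import Mathlib

/-!
Soundness is an induction on derivations. For completeness, a non-theorem `A` is refuted in a
filtration of the canonical model.

Points of the canonical model are the maximal consistent sets, obtained from theories omitting a
formula by Zorn's lemma (`lindenbaum`). The canonical `R_D` is symmetric and pseudo-transitive, and
`R ⊆ R_D ∪ Id`; hence in the submodel generated by a point `x₀` omitting `A` any two distinct
points are `R_D`-related (`InCluster.canD_of_ne`). By (DS), every `R_D`-irreflexive canonical point
has a proper `R`-successor (`exists_ne_canR`).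

This generated submodel is filtrated through the subformulas of `A`, with the transitive filtration
of `R` and the least filtration of `R_D`. Distinct classes are again `R_D`-related, so the quotient
is an S4D-frame. It is a DS-frame since an irreflexive class must be a singleton consisting of an
irreflexive point, whose proper `R`-successor then lies in a different class (`filt_isDSFrame`).
The filtration is finite, and by `truth_lemma` it refutes `A` at the class of `x₀`.
-/

/-- Bimodal formulas: propositional letters, falsum, implication, box, and
the difference modality `[≠]` (called `dbox` here). -/
inductive BForm : Type
  | var : ℕ → BForm
  | bot : BForm
  | imp : BForm → BForm → BForm
  | box : BForm → BForm
  | dbox : BForm → BForm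
  deriving DecidableEq

namespace BForm

/-- Classical negation. -/
def neg (A : BForm) : BForm := imp A bot

/-- Classical conjunction. -/
def conj (A B : BForm) : BForm := neg (imp A (neg B))

/-- `◇A = ¬□¬A`. -/
def dia (A : BForm) : BForm := neg (box (neg A))

/-- `⟨≠⟩A = ¬[≠]¬A`. -/
def ddia (A : BForm) : BForm := neg (dbox (neg A))

end BForm

/-- Truth at a point of a Kripke model over a frame `(W, R, R_D)`. -/
def ksat {W : Type} (R RD : W → W → Prop) (θ : ℕ → Set W) : W → BForm → Prop
  | x, .var n => x ∈ θ n
  | _, .bot => False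
  | x, .imp A B => ksat R RD θ x A → ksat R RD θ x B
  | x, .box A => ∀ y, R x y → ksat R RD θ y A
  | x, .dbox A => ∀ y, RD x y → ksat R RD θ y A

/-- Validity in a Kripke frame: truth at every point under every valuation. -/
def kvalid {W : Type} (R RD : W → W → Prop) (A : BForm) : Prop :=
  ∀ (θ : ℕ → Set W) (x : W), ksat R RD θ x A

/-- Truth at a point of a topological model. -/
def tsat {X : Type} [TopologicalSpace X] (θ : ℕ → Set X) : X → BForm → Prop
  | x, .var n => x ∈ θ n
  | _, .bot => False
  | x, .imp A B => tsat θ x A → tsat θ x B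
  | x, .box A => ∃ U : Set X, IsOpen U ∧ x ∈ U ∧ ∀ y ∈ U, tsat θ y A
  | x, .dbox A => ∀ y, y ≠ x → tsat θ y A

/-- Validity in a topological space. -/
def tvalid (X : Type) [TopologicalSpace X] (A : BForm) : Prop :=
  ∀ (θ : ℕ → Set X) (x : X), tsat θ x A

/-- Uniform substitution of formulas for propositional letters. -/
def substF (σ : ℕ → BForm) : BForm → BForm
  | .var n => σ n
  | .bot => .bot
  | .imp A B => .imp (substF σ A) (substF σ B)
  | .box A => .box (substF σ A)
  | .dbox A => .dbox (substF σ A)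

/-- Boolean evaluation of a formula, treating letters and modal formulas as atoms. -/
def beval (v : BForm → Bool) : BForm → Bool
  | .var n => v (.var n)
  | .bot => false
  | .imp A B => !(beval v A) || beval v B
  | .box A => v (.box A)
  | .dbox A => v (.dbox A)

/-- A classical tautology of the bimodal language. -/
def Tautology (A : BForm) : Prop := ∀ v : BForm → Bool, beval v A = true

/-- The letter `p`. -/
def pLet : BForm := .var 0
/-- The letter `q`. -/
def qLet : BForm := .var 1

/-- The least bimodal logic containing `K₂`, the S4D axioms and the extra axioms `Ax`,
closed under modus ponens, uniform substitution, and both necessitation rules. -/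
inductive Logic (Ax : Set BForm) : BForm → Prop
  | taut {A : BForm} : Tautology A → Logic Ax A
  | axKBox : Logic Ax (.imp (.box (.imp pLet qLet)) (.imp (.box pLet) (.box qLet)))
  | axKD : Logic Ax (.imp (.dbox (.imp pLet qLet)) (.imp (.dbox pLet) (.dbox qLet)))
  | axBD : Logic Ax (.imp pLet (.dbox (BForm.ddia pLet)))
  | ax4mD : Logic Ax (.imp (BForm.conj pLet (.dbox pLet)) (.dbox (.dbox pLet)))
  | axTBox : Logic Ax (.imp (.box pLet) pLet)
  | ax4Box : Logic Ax (.imp (.box pLet) (.box (.box pLet)))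
  | axDBox : Logic Ax (.imp (BForm.conj (.dbox pLet) pLet) (.box pLet))
  | extra {A : BForm} : A ∈ Ax → Logic Ax A
  | mp {A B : BForm} : Logic Ax (.imp A B) → Logic Ax A → Logic Ax B
  | subst {A : BForm} (σ : ℕ → BForm) : Logic Ax A → Logic Ax (substF σ A)
  | necBox {A : BForm} : Logic Ax A → Logic Ax (.box A)
  | necD {A : BForm} : Logic Ax A → Logic Ax (.dbox A)

/-- The axiom (DS): `[≠]p → ◇p`. -/
def dsAx : BForm := .imp (.dbox pLet) (BForm.dia pLet)

/-- The axiom (AT₁): `[≠]p → [≠]□p`. -/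
def at1Ax : BForm := .imp (.dbox pLet) (.dbox (.box pLet))

/-- The logic S4D. -/
def S4D : BForm → Prop := Logic ∅

/-- The logic S4DS = S4D + (DS). -/
def S4DS : BForm → Prop := Logic {dsAx}

/-- The logic S4DT1S = S4DS + (AT₁). -/
def S4DT1S : BForm → Prop := Logic {dsAx, at1Ax}

/-- `(W, R, R_D)` is an S4D-frame: `R` is reflexive and transitive, `R_D` is
symmetric and pseudo-transitive, and `R ⊆ R_D ∪ Id`. -/
structure IsS4DFrame {W : Type} (R RD : W → W → Prop) : Prop where
  refl : ∀ x, R x x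
  trans : ∀ ⦃x y z⦄, R x y → R y z → R x z
  symm : ∀ ⦃x y⦄, RD x y → RD y x
  ptrans : ∀ ⦃x y z⦄, RD x y → RD y z → x ≠ z → RD x z
  inc : ∀ ⦃x y⦄, R x y → RD x y ∨ x = y

/-- A T₁-frame: every `R_D`-irreflexive point is `R`-minimal. -/
def IsT1Frame {W : Type} (R RD : W → W → Prop) : Prop :=
  ∀ x, ¬ RD x x → ∀ y, R y x → y = x

/-- A DS-frame: every `R_D`-irreflexive point has an `R`-successor distinct from itself. -/
def IsDSFrame {W : Type} (R RD : W → W → Prop) : Prop :=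
  ∀ x, ¬ RD x x → ∃ y, y ≠ x ∧ R x y

/-- A cd-p-morphism from a topological space `X` onto a Kripke frame `(W, R, R_D)`. -/
structure IsCdPMorphism {X : Type} [TopologicalSpace X] {W : Type}
    (R RD : W → W → Prop) (f : X → W) : Prop where
  surj : Function.Surjective f
  cl : ∀ w : W, closure (f ⁻¹' {w}) = f ⁻¹' {v | R v w}
  diff : ∀ w : W, {x : X | ∃ y, y ≠ x ∧ f y = w} = f ⁻¹' {v | RD v w}

/-- A p-morphism between Kripke frames. -/
structure IsPMorphism {W W' : Type} (R RD : W → W → Prop) (R' RD' : W' → W' → Prop)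
    (f : W → W') : Prop where
  surj : Function.Surjective f
  forth : ∀ ⦃x y⦄, R x y → R' (f x) (f y)
  forthD : ∀ ⦃x y⦄, RD x y → RD' (f x) (f y)
  back : ∀ x z, R' (f x) z → ∃ y, R x y ∧ f y = z
  backD : ∀ x z, RD' (f x) z → ∃ y, RD x y ∧ f y = z

/-- The Alexandrov topology on `W` whose open sets are the `R`-upward-closed sets. -/
def alexandrov {W : Type} (R : W → W → Prop) : TopologicalSpace W where
  IsOpen U := ∀ ⦃x⦄, x ∈ U → ∀ ⦃y⦄, R x y → y ∈ U
  isOpen_univ := fun _ _ _ _ => trivial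
  isOpen_inter := fun _ _ hU hV x hx y hxy => ⟨hU hx.1 hxy, hV hx.2 hxy⟩
  isOpen_sUnion := fun _ hS x hx y hxy => by
    obtain ⟨U, hU, hxU⟩ := hx
    exact ⟨U, hU, hS U hU hxU hxy⟩

/-! ### Soundness -/

theorem ksat_substF {W : Type} (R RD : W → W → Prop) (θ : ℕ → Set W) (σ : ℕ → BForm)
    (A : BForm) (x : W) :
    ksat R RD θ x (substF σ A) ↔ ksat R RD (fun n => {y | ksat R RD θ y (σ n)}) x A := by
  induction A generalizing x with
  | var n => rfl
  | bot => rfl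
  | imp A B ihA ihB => simp only [substF, ksat, ihA, ihB]
  | box A ih => simp only [substF, ksat, ih]
  | dbox A ih => simp only [substF, ksat, ih]

theorem ksat_of_tautology {W : Type} (R RD : W → W → Prop) (θ : ℕ → Set W) (x : W)
    {A : BForm} (h : Tautology A) : ksat R RD θ x A := by
  classical
  have key : ∀ B, beval (fun C => decide (ksat R RD θ x C)) B = true ↔ ksat R RD θ x B := by
    intro B
    induction B with
    | var n => simp [beval]
    | bot => simp [beval, ksat]
    | imp A B ihA ihB =>
      simp only [beval, ksat, ← ihA, ← ihB]
      cases beval (fun C => decide (ksat R RD θ x C)) A <;> simp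
    | box A ih => simp [beval]
    | dbox A ih => simp [beval]
  exact (key A).1 (h _)

theorem s4ds_sound {A : BForm} (h : S4DS A) {W : Type} {R RD : W → W → Prop}
    (hF : IsS4DFrame R RD) (hDS : IsDSFrame R RD) : kvalid R RD A := by
  unfold S4DS at h
  induction h with
  | taut h => exact fun θ x => ksat_of_tautology R RD θ x h
  | axKBox => exact fun θ x h1 h2 y hy => h1 y hy (h2 y hy)
  | axKD => exact fun θ x h1 h2 y hy => h1 y hy (h2 y hy)
  | axBD => exact fun θ x h y hy h' => h' x (hF.symm hy) h
  | ax4mD =>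
    intro θ x h y hy z hz
    by_contra hn
    refine h fun hp hD => ?_
    by_cases hxz : x = z
    · exact hn (hxz ▸ hp)
    · exact hn (hD z (hF.ptrans hy hz hxz))
  | axTBox => exact fun θ x h => h x (hF.refl x)
  | ax4Box => exact fun θ x h y hy z hz => h z (hF.trans hy hz)
  | axDBox =>
    intro θ x h y hy
    by_contra hn
    refine h fun hD hp => ?_
    rcases hF.inc hy with h' | rfl
    · exact hn (hD y h')
    · exact hn hp
  | extra h =>
    obtain rfl := h
    intro θ x hD hb
    by_cases hx : RD x x
    · exact hb x (hF.refl x) (hD x hx)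
    · obtain ⟨y, hne, hy⟩ := hDS x hx
      rcases hF.inc hy with h' | rfl
      · exact hb y hy (hD y h')
      · exact hne rfl
  | mp _ _ ih1 ih2 => exact fun θ x => ih1 θ x (ih2 θ x)
  | subst σ _ ih => exact fun θ x => (ksat_substF R RD θ σ _ x).2 (ih _ x)
  | necBox _ ih => exact fun θ x y _ => ih θ y
  | necD _ ih => exact fun θ x y _ => ih θ y

/-! ### Theories and the Lindenbaum lemma -/

/-- A theory: a set of formulas containing S4DS and closed under modus ponens (but not
necessarily under substitution or necessitation). -/
structure IsTheory (T : Set BForm) : Prop where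
  thm : ∀ {A}, S4DS A → A ∈ T
  mp : ∀ {A B}, BForm.imp A B ∈ T → A ∈ T → B ∈ T

/-- A maximal consistent set: a consistent theory deciding every formula. These are the points
of the canonical model. -/
structure IsMCS (T : Set BForm) : Prop extends IsTheory T where
  bot : BForm.bot ∉ T
  total : ∀ A, A ∈ T ∨ BForm.neg A ∈ T

/-- The deduction theorem for theories: `{B | A → B ∈ T}` is the theory generated by `T`
and `A`. -/
theorem IsTheory.adjoin {T : Set BForm} (hT : IsTheory T) (A : BForm) :
    IsTheory {B | BForm.imp A B ∈ T} where
  thm {B} hB := hT.mp (hT.thm (.taut (A := .imp B (.imp A B)) (by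
    intro v; simp only [beval]; cases beval v A <;> cases beval v B <;> rfl))) (hT.thm hB)
  mp {B C} h1 h2 := hT.mp (hT.mp (hT.thm (.taut
    (A := .imp (.imp A (.imp B C)) (.imp (.imp A B) (.imp A C))) (by
      intro v; simp only [beval]
      cases beval v A <;> cases beval v B <;> cases beval v C <;> rfl))) h1) h2

/-- Lindenbaum: a theory omitting `B` extends to a maximal consistent set omitting `B`. A theory
maximal among those omitting `B`, which Zorn's lemma provides, is such a set. -/
theorem lindenbaum {T : Set BForm} (hT : IsTheory T) {B : BForm} (hB : B ∉ T) :
    ∃ M, T ⊆ M ∧ IsMCS M ∧ B ∉ M := by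
  obtain ⟨M, hTM, hM⟩ := zorn_subset_nonempty {S | IsTheory S ∧ B ∉ S} (by
    intro c hc hchain hne
    obtain ⟨S₀, hS₀⟩ := hne
    refine ⟨⋃₀ c, ⟨⟨fun h => ⟨S₀, hS₀, (hc hS₀).1.thm h⟩, ?_⟩, ?_⟩,
      fun s hs => Set.subset_sUnion_of_mem hs⟩
    · rintro C D ⟨S, hS, h1⟩ ⟨S', hS', h2⟩
      rcases hchain.total hS hS' with h | h
      · exact ⟨S', hS', (hc hS').1.mp (h h1) h2⟩
      · exact ⟨S, hS, (hc hS).1.mp h1 (h h2)⟩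
    · rintro ⟨S, hS, h⟩
      exact (hc hS).2 h) T ⟨hT, hB⟩
  obtain ⟨⟨hMT, hMB⟩, hmax⟩ := hM
  have key : ∀ D, D ∉ M → BForm.imp D B ∈ M := by
    intro D hD
    by_contra hn
    have hsub : M ⊆ {E | BForm.imp D E ∈ M} := fun E hE =>
      hMT.mp (hMT.thm (.taut (A := .imp E (.imp D E)) (by
        intro v; simp only [beval]; cases beval v D <;> cases beval v E <;> rfl))) hE
    exact hD (hmax ⟨hMT.adjoin D, hn⟩ hsub (hMT.thm (.taut (A := .imp D D) (by
      intro v; simp only [beval]; cases beval v D <;> rfl))))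
  refine ⟨M, hTM, ⟨hMT, ?_, ?_⟩, hMB⟩
  · intro h
    exact hMB (hMT.mp (hMT.thm (.taut (A := .imp .bot B) (by intro v; rfl))) h)
  · intro D
    by_contra! hn
    have h1 := key _ hn.1
    have h2 := key _ hn.2
    exact hMB (hMT.mp (hMT.mp (hMT.thm (.taut
      (A := .imp (.imp D B) (.imp (.imp (BForm.neg D) B) B)) (by
        intro v; simp only [beval, BForm.neg]; cases beval v D <;> cases beval v B <;> rfl))) h1) h2)

namespace IsMCS

variable {x y z : Set BForm} {A B : BForm}

theorem neg_iff (hx : IsMCS x) : BForm.neg A ∈ x ↔ A ∉ x :=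
  ⟨fun h h' => hx.bot (hx.mp h h'), fun h => (hx.total A).resolve_left h⟩

theorem imp_iff (hx : IsMCS x) : BForm.imp A B ∈ x ↔ (A ∈ x → B ∈ x) := by
  refine ⟨fun h => hx.mp h, fun h => ?_⟩
  by_cases hA : A ∈ x
  · exact hx.mp (hx.thm (.taut (A := .imp B (.imp A B)) (by
      intro v; simp only [beval]; cases beval v A <;> cases beval v B <;> rfl))) (h hA)
  · exact hx.mp (hx.thm (.taut (A := .imp (BForm.neg A) (.imp A B)) (by
      intro v; simp only [beval, BForm.neg]; cases beval v A <;> cases beval v B <;> rfl)))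
      (hx.neg_iff.2 hA)

theorem conj_iff (hx : IsMCS x) : BForm.conj A B ∈ x ↔ A ∈ x ∧ B ∈ x := by
  rw [BForm.conj, hx.neg_iff, hx.imp_iff, hx.neg_iff]
  tauto

/-- Maximal consistent sets form an antichain, so distinct ones are separated in either
direction. -/
theorem exists_mem_notMem (hx : IsMCS x) (hz : IsMCS z) (h : x ≠ z) : ∃ E, E ∈ x ∧ E ∉ z := by
  by_contra! hn
  refine h (Set.Subset.antisymm hn fun E hE => ?_)
  by_contra hEz
  exact hz.neg_iff.1 (hn _ (hx.neg_iff.2 hEz)) hE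

/-- The substitution sending `p` to `A` and every other letter to `B`. -/
def sub2 (A B : BForm) : ℕ → BForm
  | 0 => A
  | _ => B

theorem kBox (hx : IsMCS x) (h : BForm.box (.imp A B) ∈ x) (h' : BForm.box A ∈ x) :
    BForm.box B ∈ x :=
  hx.mp (hx.mp (hx.thm (Logic.subst (sub2 A B) .axKBox)) h) h'

theorem kD (hx : IsMCS x) (h : BForm.dbox (.imp A B) ∈ x) (h' : BForm.dbox A ∈ x) :
    BForm.dbox B ∈ x :=
  hx.mp (hx.mp (hx.thm (Logic.subst (sub2 A B) .axKD)) h) h'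

theorem bD (hx : IsMCS x) (h : A ∈ x) : BForm.dbox (BForm.ddia A) ∈ x :=
  hx.mp (hx.thm (Logic.subst (sub2 A A) .axBD)) h

theorem fourD (hx : IsMCS x) (h : A ∈ x) (h' : BForm.dbox A ∈ x) :
    BForm.dbox (.dbox A) ∈ x :=
  hx.mp (hx.thm (Logic.subst (sub2 A A) .ax4mD)) (hx.conj_iff.2 ⟨h, h'⟩)

theorem tBox (hx : IsMCS x) (h : BForm.box A ∈ x) : A ∈ x :=
  hx.mp (hx.thm (Logic.subst (sub2 A A) .axTBox)) h

theorem fourBox (hx : IsMCS x) (h : BForm.box A ∈ x) : BForm.box (.box A) ∈ x :=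
  hx.mp (hx.thm (Logic.subst (sub2 A A) .ax4Box)) h

theorem dBox (hx : IsMCS x) (h : BForm.dbox A ∈ x) (h' : A ∈ x) : BForm.box A ∈ x :=
  hx.mp (hx.thm (Logic.subst (sub2 A A) .axDBox)) (hx.conj_iff.2 ⟨h, h'⟩)

theorem ds (hx : IsMCS x) (h : BForm.dbox A ∈ x) : BForm.box (BForm.neg A) ∉ x :=
  hx.neg_iff.1 (hx.mp (hx.thm (Logic.subst (A := dsAx) (sub2 A A) (.extra (Set.mem_singleton _)))) h)

theorem dbox_weaken (hx : IsMCS x) (E : BForm) (h : BForm.dbox A ∈ x) :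
    BForm.dbox (.imp E A) ∈ x :=
  hx.kD (hx.thm (.necD (.taut (A := .imp A (.imp E A)) (by
    intro v; simp only [beval]; cases beval v A <;> cases beval v E <;> rfl)))) h

end IsMCS

/-! ### The canonical relations -/

/-- The canonical accessibility relation of `□`. -/
def canR (x y : Set BForm) : Prop := ∀ B, BForm.box B ∈ x → B ∈ y

/-- The canonical accessibility relation of `[≠]`. -/
def canD (x y : Set BForm) : Prop := ∀ B, BForm.dbox B ∈ x → B ∈ y

section canonical

variable {x y z : Set BForm} {B : BForm}

theorem exists_canR (hx : IsMCS x) (h : BForm.box B ∉ x) : ∃ y, IsMCS y ∧ canR x y ∧ B ∉ y := by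
  obtain ⟨y, h1, h2, h3⟩ := lindenbaum (T := {D | BForm.box D ∈ x})
    ⟨fun h => hx.thm (.necBox h), fun h h' => hx.kBox h h'⟩ h
  exact ⟨y, h2, fun B hB => h1 hB, h3⟩

theorem exists_canD (hx : IsMCS x) (h : BForm.dbox B ∉ x) : ∃ y, IsMCS y ∧ canD x y ∧ B ∉ y := by
  obtain ⟨y, h1, h2, h3⟩ := lindenbaum (T := {D | BForm.dbox D ∈ x})
    ⟨fun h => hx.thm (.necD h), fun h h' => hx.kD h h'⟩ h
  exact ⟨y, h2, fun B hB => h1 hB, h3⟩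

theorem canD_symm (hx : IsMCS x) (hy : IsMCS y) (h : canD x y) : canD y x := by
  intro B hB
  by_contra hn
  have h1 := h _ (hx.bD (hx.neg_iff.2 hn))
  exact hy.neg_iff.1 h1 (hy.kD (hy.thm (.necD (.taut (A := .imp B (.neg (.neg B))) (by
    intro v; simp only [beval, BForm.neg]; cases beval v B <;> rfl)))) hB)

/-- If `E ∈ x` and `E ∉ z`, then `[≠]B ∈ x` makes `¬E → B` true at `x` and at every `R_D`-successor
of `x`; the axiom 4⁻ carries it to `z`, where it yields `B`. -/
theorem canD_ptrans (hx : IsMCS x) (hz : IsMCS z) (hxy : canD x y)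
    (hyz : canD y z) (hne : x ≠ z) : canD x z := by
  intro B hB
  obtain ⟨E, hE, hEz⟩ := hx.exists_mem_notMem hz hne
  have h1 : BForm.imp (.neg E) B ∈ x := hx.imp_iff.2 fun h => absurd hE (hx.neg_iff.1 h)
  exact hz.mp (hyz _ (hxy _ (hx.fourD h1 (hx.dbox_weaken _ hB)))) (hz.neg_iff.2 hEz)

theorem canD_of_canR (hx : IsMCS x) (hz : IsMCS z) (h : canR x z) (hne : x ≠ z) : canD x z := by
  intro B hB
  obtain ⟨E, hE, hEz⟩ := hx.exists_mem_notMem hz hne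
  have h1 : BForm.imp (.neg E) B ∈ x := hx.imp_iff.2 fun h => absurd hE (hx.neg_iff.1 h)
  exact hz.mp (h _ (hx.dBox (hx.dbox_weaken _ hB) h1)) (hz.neg_iff.2 hEz)

/-- Irreflexivity of `x` is witnessed by some `[≠]B ∈ x` with `B ∉ x`, and (DS) gives an
`R`-successor containing `B`. -/
theorem exists_ne_canR (hx : IsMCS x) (h : ¬ canD x x) : ∃ y, IsMCS y ∧ y ≠ x ∧ canR x y := by
  simp only [canD, not_forall] at h
  obtain ⟨B, hB, hB'⟩ := h
  obtain ⟨y, hy, hxy, hBy⟩ := exists_canR hx (hx.ds hB)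
  refine ⟨y, hy, ?_, hxy⟩
  rintro rfl
  exact hBy (hy.neg_iff.2 hB')

end canonical

/-- The part of the canonical model generated by `x₀`: the maximal consistent sets equal to `x₀`
or `R_D`-accessible from it. Distinct points of it are `R_D`-related. -/
def InCluster (x₀ y : Set BForm) : Prop := IsMCS y ∧ (y = x₀ ∨ canD x₀ y)

section cluster

variable {x₀ y z : Set BForm}

theorem InCluster.canD_of_ne (h₀ : IsMCS x₀) (hy : InCluster x₀ y) (hz : InCluster x₀ z)
    (hne : y ≠ z) : canD y z := by
  obtain ⟨hy, rfl | hy'⟩ := hy <;> obtain ⟨hz, rfl | hz'⟩ := hz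
  · exact absurd rfl hne
  · exact hz'
  · exact canD_symm h₀ hy hy'
  · exact canD_ptrans hy hz (canD_symm h₀ hy hy') hz' hne

theorem InCluster.of_canD (h₀ : IsMCS x₀) (hy : InCluster x₀ y) (hz : IsMCS z) (h : canD y z) :
    InCluster x₀ z := by
  refine ⟨hz, ?_⟩
  by_cases hne : z = x₀
  · exact .inl hne
  obtain ⟨hy, rfl | hy'⟩ := hy
  · exact .inr h
  · exact .inr (canD_ptrans h₀ hz hy' h (Ne.symm hne))

theorem InCluster.of_canR (h₀ : IsMCS x₀) (hy : InCluster x₀ y) (hz : IsMCS z) (h : canR y z) :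
    InCluster x₀ z := by
  by_cases hne : y = z
  · exact hne ▸ hy
  · exact hy.of_canD h₀ hz (canD_of_canR hy.1 hz h hne)

end cluster

/-! ### Filtration -/

/-- The set of subformulas of a formula. -/
def subfs : BForm → Set BForm
  | .var n => {.var n}
  | .bot => {.bot}
  | .imp A B => {.imp A B} ∪ (subfs A ∪ subfs B)
  | .box A => {.box A} ∪ subfs A
  | .dbox A => {.dbox A} ∪ subfs A

theorem subfs_finite (A : BForm) : (subfs A).Finite := by
  induction A with
  | var n => exact Set.finite_singleton _
  | bot => exact Set.finite_singleton _
  | imp A B ihA ihB => exact (Set.finite_singleton _).union (ihA.union ihB)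
  | box A ih => exact (Set.finite_singleton _).union ih
  | dbox A ih => exact (Set.finite_singleton _).union ih

theorem self_mem_subfs (A : BForm) : A ∈ subfs A := by
  cases A <;> simp [subfs]

theorem subfs_subset {A B : BForm} (h : B ∈ subfs A) : subfs B ⊆ subfs A := by
  induction A with
  | var n => obtain rfl := h; exact subset_rfl
  | bot => obtain rfl := h; exact subset_rfl
  | imp C D ihC ihD =>
    rcases h with h | h | h
    · obtain rfl := h; exact subset_rfl
    · exact fun E hE => .inr (.inl (ihC h hE))
    · exact fun E hE => .inr (.inr (ihD h hE))
  | box C ih =>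
    rcases h with h | h
    · obtain rfl := h; exact subset_rfl
    · exact fun E hE => .inr (ih h hE)
  | dbox C ih =>
    rcases h with h | h
    · obtain rfl := h; exact subset_rfl
    · exact fun E hE => .inr (ih h hE)

/-- The points of the filtration of the cluster of `x₀` through `Γ`. The class of `y` is encoded
by its trace `y ∩ Γ`. -/
def Filt (x₀ Γ : Set BForm) : Type := {T : Set BForm // ∃ y, InCluster x₀ y ∧ y ∩ Γ = T}

/-- The transitive (Lemmon) filtration of the canonical `R`. -/
def filtR {x₀ Γ : Set BForm} (S T : Filt x₀ Γ) : Prop :=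
  ∀ B, BForm.box B ∈ S.1 → BForm.box B ∈ T.1

/-- The least filtration of the canonical `R_D`. -/
def filtD {x₀ Γ : Set BForm} (S T : Filt x₀ Γ) : Prop :=
  ∃ y z, InCluster x₀ y ∧ InCluster x₀ z ∧ y ∩ Γ = S.1 ∧ z ∩ Γ = T.1 ∧ canD y z

section filtration

variable {x₀ Γ : Set BForm}

theorem filt_finite (hΓ : Γ.Finite) : Finite (Filt x₀ Γ) := by
  have : Finite ↥(𝒫 Γ) := hΓ.finite_subsets.to_subtype
  refine Finite.of_injective (β := ↥(𝒫 Γ)) (fun T => ⟨T.1, ?_⟩) ?_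
  · obtain ⟨y, _, h⟩ := T.2
    exact h ▸ Set.inter_subset_right
  · intro S T h
    exact Subtype.ext (congrArg (fun U : ↥(𝒫 Γ) => U.1) h)

theorem filtD_of_ne (h₀ : IsMCS x₀) {S T : Filt x₀ Γ} (h : S ≠ T) : filtD S T := by
  obtain ⟨S, y, hy, rfl⟩ := S
  obtain ⟨T, z, hz, rfl⟩ := T
  refine ⟨y, z, hy, hz, rfl, rfl, hy.canD_of_ne h₀ hz ?_⟩
  rintro rfl
  exact h rfl

theorem filtR_of_canR {y z : Set BForm} (hy : InCluster x₀ y) (hz : InCluster x₀ z)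
    (h : canR y z) :
    filtR (⟨y ∩ Γ, y, hy, rfl⟩ : Filt x₀ Γ) ⟨z ∩ Γ, z, hz, rfl⟩ :=
  fun _ hB => ⟨h _ (hy.1.fourBox hB.1), hB.2⟩

theorem filt_isS4DFrame (h₀ : IsMCS x₀) :
    IsS4DFrame (filtR (x₀ := x₀) (Γ := Γ)) (filtD (x₀ := x₀) (Γ := Γ)) where
  refl _ _ h := h
  trans _ _ _ h h' B hB := h' B (h B hB)
  symm _ _ := by
    rintro ⟨y, z, hy, hz, h1, h2, h⟩
    exact ⟨z, y, hz, hy, h2, h1, canD_symm hy.1 hz.1 h⟩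
  ptrans _ _ _ _ _ hne := filtD_of_ne h₀ hne
  inc S T _ := by
    by_cases h : S = T
    · exact .inr h
    · exact .inl (filtD_of_ne h₀ h)

/-- An irreflexive class of the filtration is a single irreflexive canonical point, because two
distinct points of it would be `R_D`-related. Its proper `R`-successor in the canonical model
therefore lies in another class. -/
theorem filt_isDSFrame (h₀ : IsMCS x₀) :
    IsDSFrame (filtR (x₀ := x₀) (Γ := Γ)) (filtD (x₀ := x₀) (Γ := Γ)) := by
  rintro ⟨T, y, hy, rfl⟩ hirr
  have hyy : ¬ canD y y := fun h => hirr ⟨y, y, hy, hy, rfl, rfl, h⟩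
  obtain ⟨z, hz, hzy, hyz⟩ := exists_ne_canR hy.1 hyy
  have hz' := hy.of_canR h₀ hz hyz
  refine ⟨⟨z ∩ Γ, z, hz', rfl⟩, fun h => ?_, filtR_of_canR hy hz' hyz⟩
  exact hirr ⟨y, z, hy, hz', rfl, congrArg Subtype.val h, hy.canD_of_ne h₀ hz' hzy.symm⟩

theorem truth_lemma (h₀ : IsMCS x₀) (hΓ : ∀ B ∈ Γ, subfs B ⊆ Γ) (B : BForm) (hB : B ∈ Γ)
    (T : Filt x₀ Γ) : ksat filtR filtD (fun n => {S | BForm.var n ∈ S.1}) T B ↔ B ∈ T.1 := by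
  induction B generalizing T with
  | var n => rfl
  | bot =>
    obtain ⟨T, y, hy, rfl⟩ := T
    exact ⟨False.elim, fun h => hy.1.bot h.1⟩
  | imp C D ihC ihD =>
    have hC : C ∈ Γ := hΓ _ hB (.inr (.inl (self_mem_subfs C)))
    have hD : D ∈ Γ := hΓ _ hB (.inr (.inr (self_mem_subfs D)))
    simp only [ksat, ihC hC, ihD hD]
    obtain ⟨T, y, hy, rfl⟩ := T
    simp only [Set.mem_inter_iff, hC, hD, hB, and_true, hy.1.imp_iff]
  | box C ih =>
    have hC : C ∈ Γ := hΓ _ hB (.inr (self_mem_subfs C))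
    simp only [ksat, ih hC]
    obtain ⟨T, y, hy, rfl⟩ := T
    constructor
    · intro h
      refine ⟨?_, hB⟩
      by_contra hn
      obtain ⟨z, hz, hyz, hCz⟩ := exists_canR hy.1 hn
      have hz' := hy.of_canR h₀ hz hyz
      exact hCz (h ⟨z ∩ Γ, z, hz', rfl⟩ (filtR_of_canR hy hz' hyz)).1
    · rintro h ⟨U, z, hz, rfl⟩ hR
      exact ⟨hz.1.tBox (hR C h).1, hC⟩
  | dbox C ih =>
    have hC : C ∈ Γ := hΓ _ hB (.inr (self_mem_subfs C))
    simp only [ksat, ih hC]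
    obtain ⟨T, y, hy, rfl⟩ := T
    constructor
    · intro h
      refine ⟨?_, hB⟩
      by_contra hn
      obtain ⟨z, hz, hyz, hCz⟩ := exists_canD hy.1 hn
      have hz' := hy.of_canD h₀ hz hyz
      exact hCz (h ⟨z ∩ Γ, z, hz', rfl⟩ ⟨y, z, hy, hz', rfl, rfl, hyz⟩).1
    · rintro h U ⟨y', z, hy', hz, h1, h2, hD⟩
      rw [← h1] at h
      exact h2 ▸ ⟨hD C h.1, hC⟩

end filtration

/-- finite model property of S4DS: `A ∈ S4DS` iff `A` is valid in every
finite S4D-frame that is a DS-frame. -/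
theorem s4ds_fmp (A : BForm) :
    S4DS A ↔ ∀ (W : Type) (R RD : W → W → Prop), Finite W → IsS4DFrame R RD →
      IsDSFrame R RD → kvalid R RD A := by
  refine ⟨fun h W R RD _ hF hDS => s4ds_sound h hF hDS, fun h => ?_⟩
  by_contra hA
  obtain ⟨x₀, -, h₀, hA₀⟩ := lindenbaum (T := {B | S4DS B})
    ⟨fun h => h, fun h h' => Logic.mp h h'⟩ hA
  have hval := h (Filt x₀ (subfs A)) filtR filtD (filt_finite (subfs_finite A))
    (filt_isS4DFrame h₀) (filt_isDSFrame h₀) (fun n => {S | BForm.var n ∈ S.1})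
    ⟨x₀ ∩ subfs A, x₀, ⟨h₀, .inl rfl⟩, rfl⟩
  exact hA₀ ((truth_lemma h₀ (fun _ => subfs_subset) A (self_mem_subfs A) _).1 hval).1
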